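/- Let A₁ and A₂ be finite-dimensional simple evolution algebras over a field K with directed graphs E and F relative to natural bases, let d₁ (resp. d₂) be the greatest common divisor of the lengths of all closed directed paths in E (resp. F). Then the tensor product algebra A₁ ⊗_K A₂ (with multiplication (a⊗b)(a'⊗b') = aa' ⊗ bb') is a simple algebra if and only if gcd(d₁, d₂) = 1. In particular, if E and F possess closed paths of coprime lengths, then A₁ ⊗_K A₂ is simple. -/

import Mathlib

open scoped TensorProduct

/-!
With respect to a natural basis `b`, `x * b i` is a multiple of `b i * b i` by the `i`-th
coordinate of `x`. An ideal containing an `x` with nonzero `i`-th coordinate therefore contains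
`b i * b i`, and then `b j * b j` for every vertex `j` reachable from `i`. It follows that an
evolution algebra is simple if and only if it is nonzero, the squares of its natural basis span it,
and its graph is strongly connected. The first two properties pass to the tensor product, whose
graph is the tensor product of the graphs.

In a strongly connected graph of period `d`, the lengths of the walks between two given vertices
lie in a single residue class modulo `d`, and contain every large enough number of that class. By
the Chinese remainder theorem, walks between prescribed endpoints in two such graphs can always be
chosen of equal length exactly when the periods are coprime.
-/

open Filter Relation

section Graph

variable {ι κ : Type*} {r : ι → ι → Prop} {s : κ → κ → Prop}

/-- A directed walk of length `n` from `i` to `j` in the graph with edge relation `r`. -/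
def HasWalk (r : ι → ι → Prop) : ℕ → ι → ι → Prop
  | 0, i, j => i = j
  | n + 1, i, j => ∃ k, r i k ∧ HasWalk r n k j

theorem hasWalk_one {i j : ι} (h : r i j) : HasWalk r 1 i j := ⟨j, h, rfl⟩

theorem HasWalk.trans {m n : ℕ} {i j k : ι} (hij : HasWalk r m i j) (hjk : HasWalk r n j k) :
    HasWalk r (m + n) i k := by
  induction m generalizing i with
  | zero => cases hij; simpa using hjk
  | succ m ih =>
    obtain ⟨l, hil, hlj⟩ := hij
    rw [Nat.add_right_comm]
    exact ⟨l, hil, ih hlj⟩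

theorem HasWalk.reflTransGen {n : ℕ} {i j : ι} (h : HasWalk r n i j) : ReflTransGen r i j := by
  induction n generalizing i with
  | zero => cases h; rfl
  | succ n ih =>
    obtain ⟨k, hik, hkj⟩ := h
    exact (ih hkj).head hik

theorem transGen_iff_exists_hasWalk {i j : ι} :
    TransGen r i j ↔ ∃ n, HasWalk r (n + 1) i j := by
  constructor
  · intro h
    induction h with
    | single hij => exact ⟨0, hasWalk_one hij⟩
    | tail _ hjk ih =>
      obtain ⟨n, hn⟩ := ih
      exact ⟨n + 1, hn.trans (hasWalk_one hjk)⟩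
  · rintro ⟨n, k, hik, hkj⟩
    exact TransGen.head' hik hkj.reflTransGen

theorem hasWalk_length_of_isChain {l : List ι} {i : ι} (h : List.IsChain r (i :: l)) :
    HasWalk r l.length i ((i :: l).getLast (List.cons_ne_nil i l)) := by
  induction l generalizing i with
  | nil => rfl
  | cons k l ih =>
    obtain ⟨hik, hkl⟩ := List.isChain_cons_cons.mp h
    exact ⟨k, hik, ih hkl⟩

theorem HasWalk.exists_isChain {n : ℕ} {i j : ι} (h : HasWalk r n i j) :
    ∃ l : List ι, l.length = n ∧ List.IsChain r (i :: l) ∧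
      (i :: l).getLast (List.cons_ne_nil i l) = j := by
  induction n generalizing i with
  | zero => exact ⟨[], rfl, List.IsChain.singleton i, h⟩
  | succ n ih =>
    obtain ⟨k, hik, hkj⟩ := h
    obtain ⟨l, rfl, hl, rfl⟩ := ih hkj
    exact ⟨k :: l, rfl, List.IsChain.cons_cons hik hl, rfl⟩

/-- A closed path, given by its nonempty list of vertices: consecutive vertices are joined by an
edge, and the last vertex is joined to the first. Its length is the length of the list. -/
def IsClosedPath (r : ι → ι → Prop) (l : List ι) (h : l ≠ []) : Prop :=
  List.IsChain r (l.getLast h :: l)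

theorem IsClosedPath.hasWalk {l : List ι} {h : l ≠ []} (hl : IsClosedPath r l h) :
    HasWalk r l.length (l.getLast h) (l.getLast h) := by
  simpa only [List.getLast_cons h] using hasWalk_length_of_isChain hl

theorem HasWalk.exists_isClosedPath {n : ℕ} {i : ι} (hn : n ≠ 0) (h : HasWalk r n i i) :
    ∃ (l : List ι) (hl : l ≠ []), IsClosedPath r l hl ∧ l.length = n := by
  obtain ⟨l, rfl, hchain, hlast⟩ := h.exists_isChain
  have hl : l ≠ [] := List.ne_nil_of_length_pos (Nat.pos_of_ne_zero hn)
  rw [List.getLast_cons hl] at hlast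
  exact ⟨l, hl, by rwa [IsClosedPath, hlast], rfl⟩

/-- The period of a graph: the greatest common divisor of the lengths of its closed walks, which
is `0` if the graph is acyclic. -/
noncomputable def graphPeriod (r : ι → ι → Prop) : ℕ :=
  Nat.setGcd {n | ∃ i, HasWalk r n i i}

theorem HasWalk.graphPeriod_dvd {n : ℕ} {i : ι} (h : HasWalk r n i i) : graphPeriod r ∣ n :=
  Nat.setGcd_dvd_of_mem ⟨i, h⟩

theorem dvd_graphPeriod_iff {c : ℕ} :
    c ∣ graphPeriod r ↔ ∀ n i, HasWalk r n i i → c ∣ n := by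
  simp only [graphPeriod, Nat.dvd_setGcd_iff, Set.mem_ofPred_eq, forall_exists_index]

theorem dvd_graphPeriod_iff_isClosedPath {c : ℕ} :
    c ∣ graphPeriod r ↔
      ∀ (l : List ι) (h : l ≠ []), IsClosedPath r l h → c ∣ l.length := by
  rw [dvd_graphPeriod_iff]
  refine ⟨fun H l h hl => H _ _ hl.hasWalk, fun H n i hw => ?_⟩
  rcases eq_or_ne n 0 with rfl | hn
  · exact dvd_zero c
  · obtain ⟨l, h, hl, rfl⟩ := hw.exists_isClosedPath hn
    exact H l h hl

/-- `d` is the greatest common divisor of the lengths of the closed paths of the graph `r`,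
expressed by the universal property. -/
def IsClosedPathGcd (r : ι → ι → Prop) (d : ℕ) : Prop :=
  (∀ (l : List ι) (h : l ≠ []), IsClosedPath r l h → d ∣ l.length) ∧
    ∀ c : ℕ, (∀ (l : List ι) (h : l ≠ []), IsClosedPath r l h → c ∣ l.length) → c ∣ d

theorem IsClosedPathGcd.eq_graphPeriod {d : ℕ} (h : IsClosedPathGcd r d) : d = graphPeriod r :=
  Nat.dvd_antisymm (dvd_graphPeriod_iff_isClosedPath.mpr h.1)
    (h.2 _ (dvd_graphPeriod_iff_isClosedPath.mp dvd_rfl))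

/-- Any two vertices, equal or not, are joined by a directed walk of positive length. In
particular the graph with one vertex and no edge is excluded. -/
def StronglyConnected (r : ι → ι → Prop) : Prop :=
  ∀ i j, TransGen r i j

theorem StronglyConnected.exists_hasWalk (hr : StronglyConnected r) (i j : ι) :
    ∃ n, HasWalk r (n + 1) i j :=
  transGen_iff_exists_hasWalk.mp (hr i j)

theorem StronglyConnected.graphPeriod_ne_zero [Nonempty ι] (hr : StronglyConnected r) :
    graphPeriod r ≠ 0 := by
  obtain ⟨i⟩ := ‹Nonempty ι›
  obtain ⟨n, hn⟩ := hr.exists_hasWalk i i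
  exact ne_zero_of_dvd_ne_zero n.succ_ne_zero hn.graphPeriod_dvd

theorem StronglyConnected.modEq_of_hasWalk (hr : StronglyConnected r) {m n : ℕ} {i j : ι}
    (hm : HasWalk r m i j) (hn : HasWalk r n i j) : m ≡ n [MOD graphPeriod r] := by
  obtain ⟨c, hc⟩ := hr.exists_hasWalk j i
  have hm0 : m + (c + 1) ≡ 0 [MOD graphPeriod r] :=
    Nat.modEq_zero_iff_dvd.mpr (hm.trans hc).graphPeriod_dvd
  have hn0 : n + (c + 1) ≡ 0 [MOD graphPeriod r] :=
    Nat.modEq_zero_iff_dvd.mpr (hn.trans hc).graphPeriod_dvd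
  exact Nat.ModEq.add_right_cancel' _ (hm0.trans hn0.symm)

theorem StronglyConnected.setGcd_hasWalk_self_dvd_graphPeriod (hr : StronglyConnected r) (i : ι) :
    Nat.setGcd {n | HasWalk r n i i} ∣ graphPeriod r := by
  refine dvd_graphPeriod_iff.mpr fun n k hk => ?_
  obtain ⟨a, ha⟩ := hr.exists_hasWalk i k
  obtain ⟨b, hb⟩ := hr.exists_hasWalk k i
  have hshort : Nat.setGcd {n | HasWalk r n i i} ∣ (a + 1) + (b + 1) :=
    Nat.setGcd_dvd_of_mem (ha.trans hb)
  have hlong : Nat.setGcd {n | HasWalk r n i i} ∣ (a + 1) + n + (b + 1) :=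
    Nat.setGcd_dvd_of_mem ((ha.trans hk).trans hb)
  rw [Nat.add_right_comm] at hlong
  exact (Nat.dvd_add_right hshort).mp hlong

theorem StronglyConnected.eventually_hasWalk_self (hr : StronglyConnected r) (i : ι) :
    ∀ᶠ n in atTop, graphPeriod r ∣ n → HasWalk r n i i := by
  let S : AddSubmonoid ℕ :=
    { carrier := {n | HasWalk r n i i}
      zero_mem' := rfl
      add_mem' := HasWalk.trans }
  obtain ⟨N, hN⟩ := Nat.exists_mem_closure_of_ge (S : Set ℕ)
  rw [AddSubmonoid.closure_eq] at hN
  filter_upwards [eventually_ge_atTop N] with n hn hdvd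
  exact hN n hn ((hr.setGcd_hasWalk_self_dvd_graphPeriod i).trans hdvd)

theorem StronglyConnected.eventually_hasWalk_of_modEq (hr : StronglyConnected r) {a : ℕ} {i j : ι}
    (ha : HasWalk r a i j) : ∀ᶠ n in atTop, n ≡ a [MOD graphPeriod r] → HasWalk r n i j := by
  filter_upwards [(tendsto_sub_atTop_nat a).eventually (hr.eventually_hasWalk_self i),
    eventually_ge_atTop a] with n hn han hmod
  have hloop : HasWalk r (n - a) i i := hn ((Nat.modEq_iff_dvd' han).mp hmod.symm)
  simpa only [Nat.sub_add_cancel han] using hloop.trans ha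

/-- The tensor product of two graphs, whose walks are the pairs of walks of equal length. -/
def tensorGraph (r : ι → ι → Prop) (s : κ → κ → Prop) : ι × κ → ι × κ → Prop :=
  fun p q => r p.1 q.1 ∧ s p.2 q.2

theorem hasWalk_tensorGraph {n : ℕ} {p q : ι × κ} :
    HasWalk (tensorGraph r s) n p q ↔ HasWalk r n p.1 q.1 ∧ HasWalk s n p.2 q.2 := by
  induction n generalizing p with
  | zero => exact Prod.ext_iff
  | succ n ih =>
    constructor
    · rintro ⟨k, hpk, hkq⟩
      exact ⟨⟨k.1, hpk.1, (ih.mp hkq).1⟩, ⟨k.2, hpk.2, (ih.mp hkq).2⟩⟩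
    · rintro ⟨⟨k, hpk, hkq⟩, ⟨l, hpl, hlq⟩⟩
      exact ⟨(k, l), ⟨hpk, hpl⟩, ih.mpr ⟨hkq, hlq⟩⟩

theorem StronglyConnected.coprime_graphPeriod_of_tensorGraph [Nonempty ι] [Nonempty κ]
    (hr : StronglyConnected r) (hrs : StronglyConnected (tensorGraph r s)) :
    (graphPeriod r).Coprime (graphPeriod s) := by
  obtain ⟨i⟩ := ‹Nonempty ι›
  obtain ⟨j⟩ := ‹Nonempty κ›
  obtain ⟨i', hedge, -⟩ := TransGen.head'_iff.mp (hr i i)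
  obtain ⟨n, hn⟩ := hrs.exists_hasWalk (i, j) (i', j)
  obtain ⟨hwr, hws⟩ := hasWalk_tensorGraph.mp hn
  have hone : n + 1 ≡ 1 [MOD graphPeriod r] := hr.modEq_of_hasWalk hwr (hasWalk_one hedge)
  have hzero : n + 1 ≡ 0 [MOD graphPeriod s] := Nat.modEq_zero_iff_dvd.mpr hws.graphPeriod_dvd
  refine Nat.dvd_one.mp (Nat.modEq_zero_iff_dvd.mp ?_)
  exact (hone.of_dvd (Nat.gcd_dvd_left _ _)).symm.trans (hzero.of_dvd (Nat.gcd_dvd_right _ _))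

theorem StronglyConnected.tensorGraph_of_coprime (hr : StronglyConnected r)
    (hs : StronglyConnected s) (hco : (graphPeriod r).Coprime (graphPeriod s)) :
    StronglyConnected (tensorGraph r s) := by
  intro p q
  have : Nonempty ι := ⟨p.1⟩
  have : Nonempty κ := ⟨p.2⟩
  obtain ⟨a, ha⟩ := hr.exists_hasWalk p.1 q.1
  obtain ⟨b, hb⟩ := hs.exists_hasWalk p.2 q.2
  let c := Nat.chineseRemainder hco (a + 1) (b + 1)
  have hfreq : ∃ᶠ n in atTop, n ≡ c [MOD graphPeriod r * graphPeriod s] :=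
    Nat.frequently_modEq (mul_ne_zero hr.graphPeriod_ne_zero hs.graphPeriod_ne_zero) c
  obtain ⟨n, hnc, ⟨hnr, hns⟩, hpos⟩ := (hfreq.and_eventually
    (((hr.eventually_hasWalk_of_modEq ha).and (hs.eventually_hasWalk_of_modEq hb)).and
      (eventually_gt_atTop 0))).exists
  obtain ⟨n, rfl⟩ := Nat.exists_eq_add_one.mpr hpos
  have hwr := hnr ((hnc.of_mul_right _).trans c.2.1)
  have hws := hns ((hnc.of_mul_left _).trans c.2.2)
  exact transGen_iff_exists_hasWalk.mpr ⟨n, hasWalk_tensorGraph.mpr ⟨hwr, hws⟩⟩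

theorem StronglyConnected.tensorGraph_iff [Nonempty ι] [Nonempty κ] (hr : StronglyConnected r)
    (hs : StronglyConnected s) :
    StronglyConnected (tensorGraph r s) ↔ (graphPeriod r).Coprime (graphPeriod s) :=
  ⟨hr.coprime_graphPeriod_of_tensorGraph, hr.tensorGraph_of_coprime hs⟩

end Graph

section Algebra

variable {K A ι : Type*}

section Semiring

variable [Semiring K] [NonUnitalNonAssocSemiring A] [Module K A]

/-- A two-sided ideal of a not necessarily associative `K`-algebra, as a predicate on
subspaces. -/
def IsAlgebraIdeal (I : Submodule K A) : Prop :=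
  ∀ x ∈ I, ∀ a : A, a * x ∈ I ∧ x * a ∈ I

variable (K A) in
/-- A simple `K`-algebra: the product is not identically zero and there are no proper nonzero
two-sided ideals. -/
def IsSimpleAlgebra : Prop :=
  (∃ x y : A, x * y ≠ 0) ∧ ∀ I : Submodule K A, IsAlgebraIdeal I → I = ⊥ ∨ I = ⊤

/-- A natural basis: distinct basis vectors multiply to zero. An evolution algebra is an algebra
that has one. -/
def IsNaturalBasis (b : Module.Basis ι K A) : Prop :=
  ∀ i j, i ≠ j → b i * b j = 0

/-- The graph of an evolution algebra relative to the basis `b`, with an edge from `i` to `j` when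
`b j` occurs in the square of `b i`. -/
def basisGraph (b : Module.Basis ι K A) (i j : ι) : Prop :=
  b.repr (b i * b i) j ≠ 0

theorem IsSimpleAlgebra.nonempty_basis_index (hA : IsSimpleAlgebra K A)
    (b : Module.Basis ι K A) : Nonempty ι := by
  obtain ⟨⟨x, y, hxy⟩, -⟩ := hA
  have : Nontrivial A := nontrivial_of_ne _ _ hxy
  exact b.index_nonempty

variable {b : Module.Basis ι K A}

theorem exists_basisGraph_of_span_range_sq_eq_top [Nontrivial K]
    (hspan : Submodule.span K (Set.range fun i => b i * b i) = ⊤) (j : ι) :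
    ∃ k, basisGraph b k j := by
  by_contra! h
  have hle : Submodule.span K (Set.range fun i => b i * b i) ≤ LinearMap.ker (b.coord j) :=
    Submodule.span_le.mpr (Set.range_subset_iff.mpr fun k => not_not.mp (h k))
  have hj : b j ∈ LinearMap.ker (b.coord j) := hle (hspan ▸ Submodule.mem_top)
  simp at hj

end Semiring

section CommSemiring

variable [CommSemiring K] [NonUnitalNonAssocSemiring A] [Module K A] {b : Module.Basis ι K A}

theorem IsNaturalBasis.mul_basis [IsScalarTower K A A] (hb : IsNaturalBasis b) (x : A)
    (i : ι) : x * b i = b.repr x i • (b i * b i) := by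
  have heq : LinearMap.mulRight K (b i) = (b.coord i).smulRight (b i * b i) := by
    refine b.ext fun j => ?_
    rcases eq_or_ne j i with rfl | hji
    · simp
    · simp [hb j i hji, Finsupp.single_eq_of_ne' hji]
  simpa using LinearMap.congr_fun heq x

theorem IsNaturalBasis.basis_mul [SMulCommClass K A A] (hb : IsNaturalBasis b) (x : A)
    (i : ι) : b i * x = b.repr x i • (b i * b i) := by
  have heq : LinearMap.mulLeft K (b i) = (b.coord i).smulRight (b i * b i) := by
    refine b.ext fun j => ?_
    rcases eq_or_ne j i with rfl | hji
    · simp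
    · simp [hb i j hji.symm, Finsupp.single_eq_of_ne' hji]
  simpa using LinearMap.congr_fun heq x

variable [SMulCommClass K A A] [IsScalarTower K A A]

theorem IsNaturalBasis.mul_mem_of_forall_sq_mem (hb : IsNaturalBasis b) {I : Submodule K A} {x : A}
    (hx : ∀ i, b.repr x i ≠ 0 → b i * b i ∈ I) (a : A) : a * x ∈ I ∧ x * a ∈ I := by
  have hsmul (i : ι) : b.repr x i • (b i * b i) ∈ I := by
    by_cases hi : b.repr x i = 0
    · simp [hi]
    · exact I.smul_mem _ (hx i hi)
  have hleft : Submodule.span K (Set.range b) ≤ I.comap (LinearMap.mulRight K x) :=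
    Submodule.span_le.mpr <| Set.range_subset_iff.mpr fun i => by
      simpa only [SetLike.mem_coe, Submodule.mem_comap, LinearMap.mulRight_apply, hb.basis_mul x]
        using hsmul i
  have hright : Submodule.span K (Set.range b) ≤ I.comap (LinearMap.mulLeft K x) :=
    Submodule.span_le.mpr <| Set.range_subset_iff.mpr fun i => by
      simpa only [SetLike.mem_coe, Submodule.mem_comap, LinearMap.mulLeft_apply, hb.mul_basis x]
        using hsmul i
  exact ⟨hleft (b.mem_span a), hright (b.mem_span a)⟩

theorem IsNaturalBasis.isAlgebraIdeal_span_range_sq (hb : IsNaturalBasis b) :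
    IsAlgebraIdeal (Submodule.span K (Set.range fun i => b i * b i)) :=
  fun _ _ => hb.mul_mem_of_forall_sq_mem fun i _ => Submodule.subset_span (Set.mem_range_self i)

theorem IsNaturalBasis.isAlgebraIdeal_span_image (hb : IsNaturalBasis b) {S : Set ι}
    (hS : ∀ i ∈ S, ∀ j, basisGraph b i j → j ∈ S) :
    IsAlgebraIdeal (Submodule.span K (b '' S)) := by
  refine fun x hx => hb.mul_mem_of_forall_sq_mem fun i hi => ?_
  rw [Module.Basis.mem_span_image] at hx ⊢
  exact fun j hj => hS i (hx (Finsupp.mem_support_iff.mpr hi)) j (Finsupp.mem_support_iff.mp hj)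

theorem IsNaturalBasis.span_range_sq_eq_top (hb : IsNaturalBasis b) (hA : IsSimpleAlgebra K A) :
    Submodule.span K (Set.range fun i => b i * b i) = ⊤ := by
  obtain ⟨⟨x, y, hxy⟩, hideal⟩ := hA
  refine (hideal _ hb.isAlgebraIdeal_span_range_sq).resolve_left fun hbot => hxy ?_
  have hmem : x * y ∈ Submodule.span K (Set.range fun i => b i * b i) :=
    (hb.mul_mem_of_forall_sq_mem (fun i _ => Submodule.subset_span (Set.mem_range_self i)) y).2
  rwa [hbot, Submodule.mem_bot] at hmem

theorem IsNaturalBasis.reflTransGen_basisGraph [Nontrivial K] (hb : IsNaturalBasis b)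
    (hA : IsSimpleAlgebra K A) (i j : ι) : ReflTransGen (basisGraph b) i j := by
  let S : Set ι := {j | ReflTransGen (basisGraph b) i j}
  have hmem (k : ι) : b k ∈ Submodule.span K (b '' S) ↔ k ∈ S := by
    simp [Module.Basis.mem_span_image]
  have hideal : IsAlgebraIdeal (Submodule.span K (b '' S)) :=
    hb.isAlgebraIdeal_span_image fun _ hk _ hkl => hk.tail hkl
  have hi : b i ∈ Submodule.span K (b '' S) := (hmem i).mpr .refl
  have hne : Submodule.span K (b '' S) ≠ ⊥ := fun hbot =>
    b.ne_zero i ((Submodule.mem_bot K).mp (hbot ▸ hi))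
  have htop := (hA.2 _ hideal).resolve_left hne
  exact (hmem j).mp (htop ▸ Submodule.mem_top)

theorem IsNaturalBasis.stronglyConnected_basisGraph [Nontrivial K] (hb : IsNaturalBasis b)
    (hA : IsSimpleAlgebra K A) : StronglyConnected (basisGraph b) := fun i j => by
  obtain ⟨k, hkj⟩ := exists_basisGraph_of_span_range_sq_eq_top (hb.span_range_sq_eq_top hA) j
  exact .tail' (hb.reflTransGen_basisGraph hA i k) hkj

end CommSemiring

section Semifield

variable [Semifield K] [NonUnitalNonAssocSemiring A] [Module K A] [SMulCommClass K A A]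
  {b : Module.Basis ι K A}

theorem IsNaturalBasis.sq_mem_of_repr_ne_zero (hb : IsNaturalBasis b) {I : Submodule K A}
    (hI : IsAlgebraIdeal I) {x : A} (hx : x ∈ I) {i : ι} (hi : b.repr x i ≠ 0) :
    b i * b i ∈ I := by
  have hmul : b i * x ∈ I := (hI x hx (b i)).1
  rw [hb.basis_mul] at hmul
  exact (I.smul_mem_iff hi).mp hmul

theorem IsNaturalBasis.sq_mem_of_transGen (hb : IsNaturalBasis b) {I : Submodule K A}
    (hI : IsAlgebraIdeal I) {i j : ι} (hij : TransGen (basisGraph b) i j) (hi : b i * b i ∈ I) :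
    b j * b j ∈ I := by
  induction hij with
  | single hij => exact hb.sq_mem_of_repr_ne_zero hI hi hij
  | tail _ hjk ih => exact hb.sq_mem_of_repr_ne_zero hI ih hjk

theorem IsNaturalBasis.isSimpleAlgebra [Nonempty ι] (hb : IsNaturalBasis b)
    (hspan : Submodule.span K (Set.range fun i => b i * b i) = ⊤)
    (hconn : StronglyConnected (basisGraph b)) : IsSimpleAlgebra K A := by
  constructor
  · obtain ⟨j⟩ := ‹Nonempty ι›
    obtain ⟨k, hkj⟩ := exists_basisGraph_of_span_range_sq_eq_top hspan j
    exact ⟨b k, b k, fun hzero => hkj (by simp [hzero])⟩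
  · refine fun I hI => or_iff_not_imp_left.mpr fun hbot => ?_
    obtain ⟨x, hx, hx0⟩ := I.ne_bot_iff.mp hbot
    obtain ⟨i, hi⟩ : ∃ i, b.repr x i ≠ 0 := by
      simpa using mt b.forall_coord_eq_zero_iff.mp hx0
    have hsq (j : ι) : b j * b j ∈ I :=
      hb.sq_mem_of_transGen hI (hconn i j) (hb.sq_mem_of_repr_ne_zero hI hx hi)
    rw [eq_top_iff, ← hspan, Submodule.span_le]
    exact Set.range_subset_iff.mpr hsq

end Semifield

end Algebra

section TensorProduct

variable {K A₁ A₂ ι₁ ι₂ : Type*}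
  [NonUnitalNonAssocSemiring A₁] [NonUnitalNonAssocSemiring A₂]

section CommSemiring

variable [CommSemiring K]
  [Module K A₁] [SMulCommClass K A₁ A₁] [IsScalarTower K A₁ A₁]
  [Module K A₂] [SMulCommClass K A₂ A₂] [IsScalarTower K A₂ A₂]
  {b₁ : Module.Basis ι₁ K A₁} {b₂ : Module.Basis ι₂ K A₂}

theorem IsNaturalBasis.tensorProduct (hb₁ : IsNaturalBasis b₁) (hb₂ : IsNaturalBasis b₂) :
    IsNaturalBasis (b₁.tensorProduct b₂) := by
  rintro ⟨i, j⟩ ⟨i', j'⟩ hne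
  simp only [Module.Basis.tensorProduct_apply, Algebra.TensorProduct.tmul_mul_tmul]
  rcases eq_or_ne i i' with rfl | hi
  · have hj : j ≠ j' := fun hj => hne (by rw [hj])
    rw [hb₂ j j' hj, TensorProduct.tmul_zero]
  · rw [hb₁ i i' hi, TensorProduct.zero_tmul]

theorem basisGraph_tensorProduct [NoZeroDivisors K] :
    basisGraph (b₁.tensorProduct b₂) = tensorGraph (basisGraph b₁) (basisGraph b₂) := by
  ext ⟨i, j⟩ ⟨i', j'⟩
  simp [basisGraph, tensorGraph, and_comm]

theorem span_range_sq_tensorProduct_eq_top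
    (h₁ : Submodule.span K (Set.range fun i => b₁ i * b₁ i) = ⊤)
    (h₂ : Submodule.span K (Set.range fun j => b₂ j * b₂ j) = ⊤) :
    Submodule.span K
      (Set.range fun p => b₁.tensorProduct b₂ p * b₁.tensorProduct b₂ p) = ⊤ := by
  rw [← TensorProduct.map₂_mk_top_top_eq_top, ← h₁, ← h₂, Submodule.map₂_span_span,
    Set.image2_range]
  simp [Module.Basis.tensorProduct_apply']

end CommSemiring

variable [Semifield K]
  [Module K A₁] [SMulCommClass K A₁ A₁] [IsScalarTower K A₁ A₁]
  [Module K A₂] [SMulCommClass K A₂ A₂] [IsScalarTower K A₂ A₂]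
  {b₁ : Module.Basis ι₁ K A₁} {b₂ : Module.Basis ι₂ K A₂}

theorem IsNaturalBasis.isSimpleAlgebra_tensorProduct_iff
    (hb₁ : IsNaturalBasis b₁) (hb₂ : IsNaturalBasis b₂)
    (hA₁ : IsSimpleAlgebra K A₁) (hA₂ : IsSimpleAlgebra K A₂) :
    IsSimpleAlgebra K (A₁ ⊗[K] A₂) ↔
      (graphPeriod (basisGraph b₁)).Coprime (graphPeriod (basisGraph b₂)) := by
  have : Nonempty ι₁ := hA₁.nonempty_basis_index b₁
  have : Nonempty ι₂ := hA₂.nonempty_basis_index b₂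
  have hb := hb₁.tensorProduct hb₂
  have hspan := span_range_sq_tensorProduct_eq_top
    (hb₁.span_range_sq_eq_top hA₁) (hb₂.span_range_sq_eq_top hA₂)
  rw [← (hb₁.stronglyConnected_basisGraph hA₁).tensorGraph_iff
    (hb₂.stronglyConnected_basisGraph hA₂), ← basisGraph_tensorProduct]
  exact ⟨hb.stronglyConnected_basisGraph, hb.isSimpleAlgebra hspan⟩

theorem tensor_simple_iff_gcd_eq_one_general
    (hb₁ : IsNaturalBasis b₁) (hb₂ : IsNaturalBasis b₂)
    (hA₁ : IsSimpleAlgebra K A₁) (hA₂ : IsSimpleAlgebra K A₂)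
    {edge₁ : ι₁ → ι₁ → Prop} (he₁ : ∀ i j, edge₁ i j ↔ basisGraph b₁ i j)
    {edge₂ : ι₂ → ι₂ → Prop} (he₂ : ∀ i j, edge₂ i j ↔ basisGraph b₂ i j)
    {d₁ d₂ : ℕ} (hd₁ : IsClosedPathGcd edge₁ d₁) (hd₂ : IsClosedPathGcd edge₂ d₂) :
    (IsSimpleAlgebra K (A₁ ⊗[K] A₂) ↔ Nat.gcd d₁ d₂ = 1) ∧
    ((∃ (l₁ : List ι₁) (h₁ : l₁ ≠ []) (l₂ : List ι₂) (h₂ : l₂ ≠ []),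
        IsClosedPath edge₁ l₁ h₁ ∧ IsClosedPath edge₂ l₂ h₂ ∧
        Nat.Coprime l₁.length l₂.length) →
      IsSimpleAlgebra K (A₁ ⊗[K] A₂)) := by
  have hiff : IsSimpleAlgebra K (A₁ ⊗[K] A₂) ↔ Nat.gcd d₁ d₂ = 1 := by
    obtain rfl : edge₁ = basisGraph b₁ := funext₂ fun i j => propext (he₁ i j)
    obtain rfl : edge₂ = basisGraph b₂ := funext₂ fun i j => propext (he₂ i j)
    rw [hd₁.eq_graphPeriod, hd₂.eq_graphPeriod]
    exact hb₁.isSimpleAlgebra_tensorProduct_iff hb₂ hA₁ hA₂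
  refine ⟨hiff, ?_⟩
  rintro ⟨l₁, h₁, l₂, h₂, hl₁, hl₂, hcoprime⟩
  exact hiff.mpr (hcoprime.of_dvd (hd₁.1 l₁ h₁ hl₁) (hd₂.1 l₂ h₂ hl₂))

end TensorProduct

/-- Let `A₁` and `A₂` be finite-dimensional simple evolution algebras over a
field `K` with directed graphs `E`, `F` relative to natural bases, and let `d₁` (resp. `d₂`) be
the gcd of the lengths of all closed directed paths in `E` (resp. `F`) (characterized by the
universal property of gcd; closed paths of length `n` are encoded as nonempty lists `l` of
vertices with `List.Chain edge (l.getLast h) l`).  Then the tensor product algebra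
`A₁ ⊗[K] A₂` is simple iff `gcd d₁ d₂ = 1`; in particular, if `E` and `F` possess closed
paths of coprime lengths, then `A₁ ⊗[K] A₂` is simple. -/
theorem tensor_simple_iff_gcd_eq_one {K A₁ A₂ : Type*} [Field K]
    [NonUnitalNonAssocCommRing A₁] [Module K A₁]
    [SMulCommClass K A₁ A₁] [IsScalarTower K A₁ A₁]
    [NonUnitalNonAssocCommRing A₂] [Module K A₂]
    [SMulCommClass K A₂ A₂] [IsScalarTower K A₂ A₂]
    {ι₁ ι₂ : Type*} [Fintype ι₁] [Fintype ι₂]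
    (b₁ : Module.Basis ι₁ K A₁) (hn₁ : ∀ i j : ι₁, i ≠ j → b₁ i * b₁ j = 0)
    (b₂ : Module.Basis ι₂ K A₂) (hn₂ : ∀ i j : ι₂, i ≠ j → b₂ i * b₂ j = 0)
    (hs₁ : (∃ x y : A₁, x * y ≠ 0) ∧
      ∀ I : Submodule K A₁, (∀ x ∈ I, ∀ a : A₁, a * x ∈ I ∧ x * a ∈ I) → I = ⊥ ∨ I = ⊤)
    (hs₂ : (∃ x y : A₂, x * y ≠ 0) ∧
      ∀ I : Submodule K A₂, (∀ x ∈ I, ∀ a : A₂, a * x ∈ I ∧ x * a ∈ I) → I = ⊥ ∨ I = ⊤)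
    (edge₁ : ι₁ → ι₁ → Prop) (he₁ : ∀ i j : ι₁, edge₁ i j ↔ b₁.repr (b₁ i * b₁ i) j ≠ 0)
    (edge₂ : ι₂ → ι₂ → Prop) (he₂ : ∀ i j : ι₂, edge₂ i j ↔ b₂.repr (b₂ i * b₂ i) j ≠ 0)
    (d₁ d₂ : ℕ)
    (hd₁ : (∀ (l : List ι₁) (h : l ≠ []),
        List.Chain edge₁ (l.getLast h) l → d₁ ∣ l.length) ∧
      ∀ c : ℕ, (∀ (l : List ι₁) (h : l ≠ []),
        List.Chain edge₁ (l.getLast h) l → c ∣ l.length) → c ∣ d₁)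
    (hd₂ : (∀ (l : List ι₂) (h : l ≠ []),
        List.Chain edge₂ (l.getLast h) l → d₂ ∣ l.length) ∧
      ∀ c : ℕ, (∀ (l : List ι₂) (h : l ≠ []),
        List.Chain edge₂ (l.getLast h) l → c ∣ l.length) → c ∣ d₂) :
    (((∃ x y : A₁ ⊗[K] A₂, x * y ≠ 0) ∧
        ∀ I : Submodule K (A₁ ⊗[K] A₂),
          (∀ x ∈ I, ∀ a : A₁ ⊗[K] A₂, a * x ∈ I ∧ x * a ∈ I) → I = ⊥ ∨ I = ⊤)
      ↔ Nat.gcd d₁ d₂ = 1) ∧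
    ((∃ (l₁ : List ι₁) (h₁ : l₁ ≠ []) (l₂ : List ι₂) (h₂ : l₂ ≠ []),
        List.Chain edge₁ (l₁.getLast h₁) l₁ ∧ List.Chain edge₂ (l₂.getLast h₂) l₂ ∧
        Nat.Coprime l₁.length l₂.length) →
      (∃ x y : A₁ ⊗[K] A₂, x * y ≠ 0) ∧
        ∀ I : Submodule K (A₁ ⊗[K] A₂),
          (∀ x ∈ I, ∀ a : A₁ ⊗[K] A₂, a * x ∈ I ∧ x * a ∈ I) → I = ⊥ ∨ I = ⊤) := by
  exact tensor_simple_iff_gcd_eq_one_general hn₁ hn₂ hs₁ hs₂ he₁ he₂ hd₁ hd₂
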